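/- arXiv:1601.02218 — 2 statements merged into one kernel-verified Lean document; each statement's English description precedes it below -/
import Mathlib

section
/- Let {x_n} be the sequence generated by Algorithm 1 (under the hypotheses of Theorem 3.1). If p is a limit point of {x_n}, then p ∈ F, i.e., p ∈ GEP(f_i, A_i) for every i = 1,…,N and p is a fixed point of S_j for every j = 1,…,M. -/
open scoped RealInnerProductSpace
open Filter Topology

/-- `p` is the metric projection of `x` onto `K`. -/
def IsProjOn {H : Type*} [NormedAddCommGroup H] (K : Set H) (x p : H) : Prop :=
  p ∈ K ∧ ∀ v ∈ K, ‖p - x‖ ≤ ‖v - x‖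

section AuxLemmas

variable {H : Type*} [NormedAddCommGroup H] [InnerProductSpace ℝ H]

lemma aux_firm (X Y G : H) (r α : ℝ) (hr : 0 < r)
    (h1 : 0 ≤ ⟪G, -Y⟫ + (1 / r) * ⟪-Y, Y - X⟫)
    (h2 : α * ‖G‖ ^ 2 ≤ ⟪G, X⟫) :
    ‖Y‖ ^ 2 ≤ ‖X‖ ^ 2 - r * (2 * α - r) * ‖G‖ ^ 2 - ‖X - Y - r • G‖ ^ 2 := by
  have h3 : 0 ≤ r * ⟪G, -Y⟫ + ⟪-Y, Y - X⟫ := by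
    have := mul_nonneg hr.le h1
    rw [mul_add, ← mul_assoc, mul_one_div_cancel hr.ne', one_mul] at this
    exact this
  have h4 := mul_le_mul_of_nonneg_left h2 hr.le
  simp only [← real_inner_self_eq_norm_sq, inner_sub_left, inner_sub_right, inner_neg_left,
    inner_neg_right, real_inner_smul_left, real_inner_smul_right] at *
  rw [real_inner_comm X Y, real_inner_comm G X, real_inner_comm G Y] at *
  nlinarith

lemma aux_comb (X Y : H) (t : ℝ) :
    ‖t • X + (1 - t) • Y‖ ^ 2 = t * ‖X‖ ^ 2 + (1 - t) * ‖Y‖ ^ 2 - t * (1 - t) * ‖X - Y‖ ^ 2 := by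
  simp only [← real_inner_self_eq_norm_sq, inner_sub_left, inner_sub_right, inner_add_left,
    inner_add_right, real_inner_smul_left, real_inner_smul_right]
  rw [real_inner_comm X Y]
  ring

lemma aux_pseudo (Y s : H) (t κ k : ℝ) (hk : 1 ≤ k) (ht : κ ≤ t) (ht0 : 0 ≤ t) (ht1 : t ≤ 1)
    (h : ‖s‖ ^ 2 ≤ k * ‖Y‖ ^ 2 + κ * ‖Y - s‖ ^ 2) :
    ‖t • Y + (1 - t) • s‖ ^ 2 ≤ k * ‖Y‖ ^ 2 := by
  rw [aux_comb]
  have h1 := mul_le_mul_of_nonneg_left h (sub_nonneg.2 ht1)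
  have h2 : 0 ≤ (1 - t) * (t - κ) * ‖Y - s‖ ^ 2 := by
    have := sub_nonneg.2 ht1; have := sub_nonneg.2 ht; positivity
  have h3 : 0 ≤ t * (k - 1) * ‖Y‖ ^ 2 := by
    have := sub_nonneg.2 hk; positivity
  nlinarith

/-- Lipschitz estimate from strict pseudocontractivity. -/
lemma aux_lip (κ K D s t : ℝ) (hκ0 : 0 ≤ κ) (hκ1 : κ < 1) (hK : 0 ≤ K) (hs : 0 ≤ s) (hD : 0 ≤ D)
    (ht : 0 ≤ t) (hts : t ≤ D + s)
    (h : s ^ 2 ≤ K * D ^ 2 + κ * t ^ 2) :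
    s ≤ (√K + √κ) / (1 - √κ) * D := by
  have hq0 := Real.sqrt_nonneg κ
  have hq1 : √κ < 1 := by
    rw [Real.sqrt_lt' one_pos]; simpa using hκ1
  have hk := Real.sqrt_nonneg K
  have h1 : s ≤ √K * D + √κ * t := by
    apply le_of_sq_le_sq _ (by positivity)
    have e1 := Real.sq_sqrt hκ0
    have e2 := Real.sq_sqrt hK
    have : 0 ≤ √K * D * (√κ * t) := by positivity
    have e3 : (√K * D + √κ * t) ^ 2 = K * D ^ 2 + κ * t ^ 2 + 2 * (√K * D * (√κ * t)) := by
      rw [← e1, ← e2]; simp only [Real.sqrt_sq hq0, Real.sqrt_sq hk]; ring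
    linarith
  have h2 := mul_le_mul_of_nonneg_left hts hq0
  rw [div_mul_eq_mul_div, le_div_iff₀ (by linarith)]
  nlinarith

/-- Minty step. -/
lemma aux_minty (C : Set H) (hCcv : Convex ℝ C) (f : H → H → ℝ)
    (hfA1 : ∀ x ∈ C, f x x = 0)
    (hfA2 : ∀ x ∈ C, ∀ y ∈ C, f x y + f y x ≤ 0)
    (hfA3 : ∀ x ∈ C, ∀ y ∈ C, ∀ z ∈ C,
      Filter.limsup (fun t : ℝ => f (t • z + (1 - t) • x) y) (nhdsWithin 0 (Set.Ioi 0))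
        ≤ f x y)
    (hfA4conv : ∀ x ∈ C, ConvexOn ℝ C (f x))
    (hfA4lsc : ∀ x ∈ C, LowerSemicontinuousOn (f x) C)
    (p : H) (hp : p ∈ C) (g : H) (h : ∀ w ∈ C, f w p ≤ ⟪g, w - p⟫) (w : H) (hw : w ∈ C) :
    0 ≤ f p w + ⟪g, w - p⟫ := by
  set c := ⟪g, w - p⟫ with hc
  set u : ℝ → H := fun t => t • w + (1 - t) • p with hu
  have hev : ∀ᶠ t : ℝ in 𝓝[>] 0, 0 < t ∧ t < 1 := by
    filter_upwards [Ioo_mem_nhdsGT (zero_lt_one' ℝ)] with t ht using ht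
  have huC : ∀ t : ℝ, 0 < t ∧ t < 1 → u t ∈ C := fun t ht =>
    hCcv hw hp ht.1.le (by linarith [ht.2]) (by ring)
  have hlow : ∀ t : ℝ, 0 < t ∧ t < 1 → -((1 - t) * c) ≤ f (u t) w := by
    intro t ht
    have h1 := (hfA4conv _ (huC t ht)).2 hw hp ht.1.le (by linarith [ht.2] : 0 ≤ 1 - t) (by ring)
    have h2 := h _ (huC t ht)
    have h3 : ⟪g, u t - p⟫ = t * c := by
      rw [hc, ← real_inner_smul_right]; congr 1; simp only [hu]; module
    rw [h3] at h2
    have h4 := hfA1 _ (huC t ht)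
    change f (u t) (u t) ≤ _ at h1
    simp only [smul_eq_mul] at h1
    rw [h4] at h1
    have h5 := mul_le_mul_of_nonneg_left h2 (by linarith [ht.2] : 0 ≤ 1 - t)
    have h6 : 0 ≤ t * (f (u t) w + (1 - t) * c) := by nlinarith
    have := nonneg_of_mul_nonneg_right h6 ht.1
    linarith
  have hut : Tendsto u (𝓝[>] 0) (𝓝[C] p) := by
    apply tendsto_nhdsWithin_of_tendsto_nhds_of_eventually_within
    · have : Continuous u := by simp only [hu]; fun_prop
      have h2 := this.tendsto 0
      simp only [hu, zero_smul, sub_zero, one_smul, zero_add] at h2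
      exact h2.mono_left nhdsWithin_le_nhds
    · filter_upwards [hev] with t ht using huC t ht
  have hup : ∀ᶠ t in 𝓝[>] 0, f (u t) w ≤ 1 - f w p := by
    have h1 := hut.eventually (hfA4lsc w hw p hp (f w p - 1) (by linarith))
    filter_upwards [h1, hev] with t h1 ht
    have := hfA2 _ (huC t ht) w hw
    linarith
  have hbdd : IsBoundedUnder (· ≤ ·) (𝓝[>] (0:ℝ)) (fun t => f (u t) w) := ⟨_, hup⟩
  have hl : Tendsto (fun t : ℝ => -((1 - t) * c)) (𝓝[>] 0) (𝓝 (-c)) := by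
    have : Continuous (fun t : ℝ => -((1 - t) * c)) := by fun_prop
    have h2 := this.tendsto 0
    simp only [sub_zero, one_mul] at h2
    exact h2.mono_left nhdsWithin_le_nhds
  have h1 : -c ≤ Filter.limsup (fun t => f (u t) w) (𝓝[>] (0:ℝ)) := by
    rw [← hl.limsup_eq]
    apply limsup_le_limsup
    · filter_upwards [hev] with t ht using hlow t ht
    · exact hl.isCoboundedUnder_le
    · exact hbdd
  have := hfA3 p hp w hw w hw
  linarith

end AuxLemmas

/-- **Lemma 3.3.** If `p` is a limit point of the sequence `{xₙ}` generated
by Algorithm 1, then `p ∈ F`, i.e. `p` solves every generalized equilibrium problem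
`GEP(fᵢ, Aᵢ)` and is a common fixed point of the mappings `Sⱼ`. -/
theorem algorithm1_cluster_point_in_solution_set
    {H : Type*} [NormedAddCommGroup H] [InnerProductSpace ℝ H] [CompleteSpace H]
    (C : Set H) (hCne : C.Nonempty) (hCcl : IsClosed C) (hCcv : Convex ℝ C)
    (N M : ℕ) (hN : 0 < N) (hM : 0 < M)
    -- the bifunctions fᵢ satisfy (A1)-(A4)
    (f : Fin N → H → H → ℝ)
    (hfA1 : ∀ i, ∀ x ∈ C, f i x x = 0)
    (hfA2 : ∀ i, ∀ x ∈ C, ∀ y ∈ C, f i x y + f i y x ≤ 0)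
    (hfA3 : ∀ i, ∀ x ∈ C, ∀ y ∈ C, ∀ z ∈ C,
      Filter.limsup (fun t : ℝ => f i (t • z + (1 - t) • x) y) (nhdsWithin 0 (Set.Ioi 0))
        ≤ f i x y)
    (hfA4conv : ∀ i, ∀ x ∈ C, ConvexOn ℝ C (f i x))
    (hfA4lsc : ∀ i, ∀ x ∈ C, LowerSemicontinuousOn (f i x) C)
    -- the operators Aᵢ are α-inverse strongly monotone on C
    (A : Fin N → H → H) (α : ℝ) (hα : 0 < α)
    (hism : ∀ i, ∀ x ∈ C, ∀ y ∈ C, α * ‖A i x - A i y‖ ^ 2 ≤ ⟪A i x - A i y, x - y⟫)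
    -- the mappings Sⱼ : C → C are asymptotically κ-strictly pseudocontractive with
    -- the same sequence {kₙ} ⊆ [1,∞), kₙ → 1
    (S : Fin M → H → H) (hS : ∀ j, Set.MapsTo (S j) C C)
    (κ : ℝ) (hκ0 : 0 ≤ κ) (hκ1 : κ < 1)
    (k : ℕ → ℝ) (hk1 : ∀ n, 1 ≤ k n)
    (hklim : Filter.Tendsto k Filter.atTop (nhds 1))
    (hasym : ∀ j, ∀ n, 1 ≤ n → ∀ x ∈ C, ∀ y ∈ C,
      ‖(S j)^[n] x - (S j)^[n] y‖ ^ 2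
        ≤ k n * ‖x - y‖ ^ 2 + κ * ‖(x - (S j)^[n] x) - (y - (S j)^[n] y)‖ ^ 2)
    -- the solution set F is nonempty and bounded by ω
    (F : Set H)
    (hF : F = {v ∈ C | ∀ i, ∀ y ∈ C, 0 ≤ f i v y + ⟪A i v, y - v⟫} ∩
      {v | ∀ j, S j v = v})
    (hFne : F.Nonempty) (ω : ℝ) (hω : 0 < ω) (hFb : ∀ v ∈ F, ‖v‖ ≤ ω)
    -- control parameters
    (a : ℕ → ℝ) (ha0 : ∀ n, 0 < a n) (ha1 : ∀ n, a n < 1)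
    (halimsup : Filter.limsup a Filter.atTop < 1)
    (β : ℕ → ℝ) (b : ℝ) (hbκ : κ < b) (hb1 : b < 1) (hβ : ∀ n, κ ≤ β n ∧ β n ≤ b)
    (r : ℕ → ℝ) (d e : ℝ) (hd : 0 < d) (he : e < 2 * α) (hr : ∀ n, d ≤ r n ∧ r n ≤ e)
    -- the iterates of Algorithm 1
    (x : ℕ → H) (y : ℕ → Fin N → H) (z : ℕ → Fin M → H)
    (iN : ℕ → Fin N) (jM : ℕ → Fin M) (ybar zbar : ℕ → H) (Cset : ℕ → Set H)
    (hx0 : x 0 ∈ C) (hC0 : Cset 0 = C)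
    -- (i) yₙⁱ solves the regularized generalized equilibrium problem
    (hy : ∀ n i, y n i ∈ C ∧ ∀ w ∈ C,
      0 ≤ f i (y n i) w + ⟪A i (x n), w - y n i⟫ +
        (1 / r n) * ⟪w - y n i, y n i - x n⟫)
    -- (ii) iₙ maximizes ‖yₙⁱ - xₙ‖ and ȳₙ = yₙ^{iₙ}
    (hiN : ∀ n i, ‖y n i - x n‖ ≤ ‖y n (iN n) - x n‖)
    (hybar : ∀ n, ybar n = y n (iN n))
    -- (iii) zₙʲ = αₙ xₙ + (1-αₙ)(βₙ ȳₙ + (1-βₙ) Sⱼⁿ ȳₙ)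
    (hz : ∀ n j, z n j = a n • x n +
      (1 - a n) • (β n • ybar n + (1 - β n) • (S j)^[n] (ybar n)))
    -- (iv) jₙ maximizes ‖zₙʲ - xₙ‖ and z̄ₙ = zₙ^{jₙ}
    (hjM : ∀ n j, ‖z n j - x n‖ ≤ ‖z n (jM n) - x n‖)
    (hzbar : ∀ n, zbar n = z n (jM n))
    -- (v) Cₙ₊₁ = {v ∈ Cₙ : ‖z̄ₙ - v‖² ≤ ‖xₙ - v‖² + εₙ}, εₙ = (kₙ - 1)(‖xₙ‖ + ω)²
    (hCset : ∀ n, Cset (n + 1) =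
      {v ∈ Cset n | ‖zbar n - v‖ ^ 2 ≤ ‖x n - v‖ ^ 2 + (k n - 1) * (‖x n‖ + ω) ^ 2})
    -- (vi) xₙ₊₁ = P_{Cₙ₊₁} x₀
    (hxproj : ∀ n, IsProjOn (Cset (n + 1)) (x 0) (x (n + 1)))
    -- p is a limit point of {xₙ}
    (p : H) (hp : MapClusterPt p Filter.atTop x) :
    p ∈ F := by
  have hd2 : 0 < 2 * α - e := by linarith
  have hCmono : ∀ n m, n ≤ m → Cset m ⊆ Cset n := by
    intro n m h
    induction m, h using Nat.le_induction with
    | base => exact subset_rfl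
    | succ m _ ih =>
      rw [hCset m]
      exact fun v hv => ih hv.1
  have hCC : ∀ n, Cset n ⊆ C := fun n => hC0 ▸ hCmono 0 n (Nat.zero_le n)
  have hxC' : ∀ n, x n ∈ Cset n := by
    intro n
    cases n with
    | zero => rw [hC0]; exact hx0
    | succ n => exact (hxproj n).1
  have hxC : ∀ n, x n ∈ C := fun n => hCC n (hxC' n)
  have hybC : ∀ n, ybar n ∈ C := fun n => by rw [hybar]; exact (hy n _).1
  have hSC : ∀ j n v, v ∈ C → (S j)^[n] v ∈ C := fun j n v hv => (hS j).iterate n hv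
  have hCconv : ∀ n, Convex ℝ (Cset n) := by
    intro n
    induction n with
    | zero => rw [hC0]; exact hCcv
    | succ n ih =>
      rw [hCset n]
      intro v hv w hw s t hs ht hst
      refine ⟨ih hv.1 hw.1 hs ht hst, ?_⟩
      obtain rfl : t = 1 - s := by linarith
      have e1 : ∀ q : H, q - (s • v + (1 - s) • w) = s • (q - v) + (1 - s) • (q - w) := by
        intro q; module
      rw [e1, e1, aux_comb, aux_comb]
      have e2 : ∀ q : H, (q - v) - (q - w) = w - v := by intro q; abel
      rw [e2, e2]
      have h1 := mul_le_mul_of_nonneg_left hv.2 hs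
      have h2 := mul_le_mul_of_nonneg_left hw.2 ht
      nlinarith
  -- key inequality
  have hasym' : ∀ j n, ∀ v ∈ C, ∀ w ∈ C,
      ‖(S j)^[n] v - (S j)^[n] w‖ ^ 2
        ≤ k n * ‖v - w‖ ^ 2 + κ * ‖(v - (S j)^[n] v) - (w - (S j)^[n] w)‖ ^ 2 := by
    intro j n v hv w hw
    rcases Nat.eq_zero_or_pos n with rfl | hn
    · simp only [Function.iterate_zero, id, sub_self, norm_zero]
      nlinarith [hk1 0, sq_nonneg ‖v - w‖]
    · exact hasym j n hn v hv w hw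
  have hFmem : ∀ u ∈ F, u ∈ C ∧ (∀ i, ∀ y ∈ C, 0 ≤ f i u y + ⟪A i u, y - u⟫) ∧
      ∀ j, S j u = u := by
    intro u hu
    rw [hF] at hu
    exact ⟨hu.1.1, hu.1.2, hu.2⟩
  set B : H → ℕ → ℝ := fun u n => d * (2 * α - e) * ‖A (iN n) (x n) - A (iN n) u‖ ^ 2 +
      ‖x n - ybar n - r n • (A (iN n) (x n) - A (iN n) u)‖ ^ 2 with hB
  have hB0 : ∀ u n, 0 ≤ B u n := fun u n => by simp only [hB]; positivity
  have hyu : ∀ u ∈ F, ∀ n, ‖ybar n - u‖ ^ 2 ≤ ‖x n - u‖ ^ 2 - B u n := by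
    intro u hu n
    obtain ⟨huC, hug, -⟩ := hFmem u hu
    have hrn : 0 < r n := by linarith [(hr n).1]
    have h1 := (hy n (iN n)).2 u huC
    have h2 := hug (iN n) _ (hybC n)
    rw [← hybar] at h1
    have h3 := hfA2 (iN n) _ (hybC n) u huC
    have h4 := hism (iN n) _ (hxC n) u huC
    have h5 := aux_firm (x n - u) (ybar n - u) (A (iN n) (x n) - A (iN n) u) (r n) α hrn
      (by
        have e1 : -(ybar n - u) = u - ybar n := by abel
        have e2 : ybar n - u - (x n - u) = ybar n - x n := by abel
        rw [e1, e2, inner_sub_left]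
        have e3 : ⟪A (iN n) u, u - ybar n⟫ = - ⟪A (iN n) u, ybar n - u⟫ := by
          rw [← inner_neg_right]; congr 1; abel
        rw [e3]
        linarith) h4
    have e4 : x n - u - (ybar n - u) = x n - ybar n := by abel
    rw [e4] at h5
    have h6 : d * (2 * α - e) ≤ r n * (2 * α - r n) :=
      mul_le_mul (hr n).1 (by linarith [(hr n).2]) hd2.le hrn.le
    have h7 := mul_le_mul_of_nonneg_right h6 (sq_nonneg ‖A (iN n) (x n) - A (iN n) u‖)
    simp only [hB]
    linarith
  have hkey : ∀ u ∈ F, ∀ n, ‖zbar n - u‖ ^ 2 ≤ ‖x n - u‖ ^ 2 + (k n - 1) * ‖x n - u‖ ^ 2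
      - (1 - a n) * B u n := by
    intro u hu n
    obtain ⟨huC, -, hus⟩ := hFmem u hu
    have hfix : (S (jM n))^[n] u = u := Function.iterate_fixed (hus _) n
    have h1 := hasym' (jM n) n _ (hybC n) u huC
    rw [hfix] at h1
    have e1 : ybar n - (S (jM n))^[n] (ybar n) - (u - u)
        = (ybar n - u) - ((S (jM n))^[n] (ybar n) - u) := by abel
    rw [e1] at h1
    have h2 := aux_pseudo _ _ (β n) κ (k n) (hk1 n) (hβ n).1 (hκ0.trans (hβ n).1)
      ((hβ n).2.trans hb1.le) h1
    have e2 : zbar n - u = a n • (x n - u) + (1 - a n) •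
        (β n • (ybar n - u) + (1 - β n) • ((S (jM n))^[n] (ybar n) - u)) := by
      rw [hzbar, hz]; module
    rw [e2, aux_comb]
    have ha : 0 < 1 - a n := by linarith [ha1 n]
    have h3 := mul_le_mul_of_nonneg_left h2 ha.le
    have h4 := mul_le_mul_of_nonneg_left
      (mul_le_mul_of_nonneg_left (hyu u hu n) (by linarith [hk1 n] : 0 ≤ k n)) ha.le
    have h5 : 0 ≤ a n * (1 - a n) * ‖x n - u - (β n • (ybar n - u) + (1 - β n) •
        ((S (jM n))^[n] (ybar n) - u))‖ ^ 2 := by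
      have := ha0 n
      positivity
    have h6 : 0 ≤ (1 - a n) * ((k n - 1) * B u n) :=
      mul_nonneg ha.le (mul_nonneg (by linarith [hk1 n]) (hB0 u n))
    have h7 : 0 ≤ a n * ((k n - 1) * ‖x n - u‖ ^ 2) :=
      mul_nonneg (ha0 n).le (mul_nonneg (by linarith [hk1 n]) (sq_nonneg _))
    nlinarith
  have hFC : ∀ u ∈ F, ∀ n, u ∈ Cset n := by
    intro u hu n
    induction n with
    | zero => rw [hC0]; exact (hFmem u hu).1
    | succ n ih =>
      rw [hCset n]
      refine ⟨ih, ?_⟩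
      have h1 := hkey u hu n
      have h2 : 0 ≤ (1 - a n) * B u n := mul_nonneg (by linarith [ha1 n]) (hB0 u n)
      have h3 : ‖x n - u‖ ≤ ‖x n‖ + ω := (norm_sub_le _ _).trans (by linarith [hFb u hu])
      have h4 : ‖x n - u‖ ^ 2 ≤ (‖x n‖ + ω) ^ 2 := pow_le_pow_left₀ (norm_nonneg _) h3 2
      have h5 := mul_le_mul_of_nonneg_left h4 (by linarith [hk1 n] : 0 ≤ k n - 1)
      linarith
  obtain ⟨u, hu⟩ := hFne
  obtain ⟨huC, hug, hus⟩ := hFmem u hu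
  -- the sequence is Cauchy
  have hmin : ∀ n, ∀ v ∈ Cset n, ‖x n - x 0‖ ≤ ‖v - x 0‖ := by
    intro n v hv
    cases n with
    | zero => simp
    | succ n => exact (hxproj n).2 v hv
  set D : ℕ → ℝ := fun n => ‖x n - x 0‖ ^ 2 with hD
  have hDmono : Monotone D := by
    intro n m h
    exact pow_le_pow_left₀ (norm_nonneg _) (hmin n _ (hCmono n m h (hxC' m))) 2
  have hDbdd : BddAbove (Set.range D) := by
    refine ⟨‖u - x 0‖ ^ 2, ?_⟩
    rintro _ ⟨n, rfl⟩
    exact pow_le_pow_left₀ (norm_nonneg _) (hmin n _ (hFC u hu n)) 2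
  have hDlim := tendsto_atTop_ciSup hDmono hDbdd
  have hdist : ∀ n m, n ≤ m → ‖x m - x n‖ ^ 2 ≤ 2 * (D m - D n) := by
    intro n m h
    have h1 : (1/2 : ℝ) • x m + (1 - 1/2 : ℝ) • x n ∈ Cset n :=
      hCconv n (hCmono n m h (hxC' m)) (hxC' n) (by norm_num) (by norm_num) (by norm_num)
    have h2 := pow_le_pow_left₀ (norm_nonneg _) (hmin n _ h1) 2
    have e1 : (1/2 : ℝ) • x m + (1 - 1/2 : ℝ) • x n - x 0
        = (1/2 : ℝ) • (x m - x 0) + (1 - 1/2 : ℝ) • (x n - x 0) := by module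
    rw [e1, aux_comb] at h2
    have e2 : x m - x 0 - (x n - x 0) = x m - x n := by abel
    rw [e2] at h2
    simp only [hD]
    linarith
  have hcau : CauchySeq x := by
    rw [Metric.cauchySeq_iff']
    intro ε hε
    have h1 := hDlim.eventually (lt_mem_nhds (by
      have : 0 < ε ^ 2 / 2 := by positivity
      linarith : (⨆ n, D n) - ε ^ 2 / 2 < ⨆ n, D n))
    obtain ⟨n0, hn0⟩ := h1.exists
    refine ⟨n0, fun n hn => ?_⟩
    rw [dist_eq_norm]
    have h2 := hdist n0 n hn
    have h3 := le_ciSup hDbdd n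
    exact lt_of_pow_lt_pow_left₀ 2 hε.le (by linarith)
  have hxp : Tendsto x atTop (𝓝 p) := le_nhds_of_cauchy_adhp hcau hp
  have hpC : p ∈ C := hCcl.mem_of_tendsto hxp (Eventually.of_forall hxC)
  have hk0 : Tendsto (fun n => k n - 1) atTop (𝓝 0) := by
    simpa using hklim.sub_const 1
  -- zbar - x → 0
  have hzb : Tendsto zbar atTop (𝓝 p) := by
    have hx1 : Tendsto (fun n => x (n + 1)) atTop (𝓝 p) := hxp.comp (tendsto_add_atTop_nat 1)
    have h1 : Tendsto (fun n => ‖x n - x (n + 1)‖ ^ 2 + (k n - 1) * (‖x n‖ + ω) ^ 2) atTop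
        (𝓝 0) := by
      have := ((hxp.sub hx1).norm.pow 2).add (hk0.mul ((hxp.norm.add_const ω).pow 2))
      simpa using this
    have h2 : Tendsto (fun n => ‖zbar n - x (n + 1)‖ ^ 2) atTop (𝓝 0) := by
      refine squeeze_zero (fun n => sq_nonneg _) (fun n => ?_) h1
      have := hxC' (n + 1)
      rw [hCset n] at this
      exact this.2
    have h3 : Tendsto (fun n => ‖zbar n - x (n + 1)‖) atTop (𝓝 0) := by
      have := h2.sqrt
      simpa [Real.sqrt_sq] using this
    have h4 := (tendsto_zero_iff_norm_tendsto_zero.2 h3).add hx1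
    simpa using h4
  -- the bound on 1 - a n
  obtain ⟨c, hc1, hc2⟩ := exists_between halimsup
  have hac : ∀ᶠ n in atTop, a n < c :=
    eventually_lt_of_limsup_lt hc1 ⟨1, by
      rw [eventually_map]; exact Eventually.of_forall fun n => (ha1 n).le⟩
  have hc0 : 0 < 1 - c := by linarith
  have hBlim : Tendsto (B u) atTop (𝓝 0) := by
    have h1 : Tendsto (fun n => (‖x n - u‖ ^ 2 + (k n - 1) * ‖x n - u‖ ^ 2
        - ‖zbar n - u‖ ^ 2) / (1 - c)) atTop (𝓝 0) := by
      have e1 := (hxp.sub_const u).norm.pow 2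
      have e2 := (hzb.sub_const u).norm.pow 2
      have := ((e1.add (hk0.mul e1)).sub e2).div_const (1 - c)
      simpa using this
    refine squeeze_zero' (Eventually.of_forall fun n => hB0 u n) ?_ h1
    filter_upwards [hac] with n hn
    rw [le_div_iff₀ hc0]
    have := hkey u hu n
    nlinarith [hB0 u n]
  have hyb0 : Tendsto (fun n => ‖ybar n - x n‖) atTop (𝓝 0) := by
    have h1 : Tendsto (fun n => √(B u n) + e * √(B u n / (d * (2 * α - e)))) atTop (𝓝 0) := by
      have := hBlim.sqrt.add (((hBlim.div_const (d * (2 * α - e))).sqrt).const_mul e)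
      simpa using this
    refine squeeze_zero (fun n => norm_nonneg _) (fun n => ?_) h1
    have hdd : 0 < d * (2 * α - e) := by positivity
    set G := A (iN n) (x n) - A (iN n) u with hG
    have hBn : B u n = d * (2 * α - e) * ‖G‖ ^ 2 + ‖x n - ybar n - r n • G‖ ^ 2 := rfl
    have h2 : ‖x n - ybar n - r n • G‖ ≤ √(B u n) := by
      apply Real.le_sqrt_of_sq_le
      rw [hBn]
      have : 0 ≤ d * (2 * α - e) * ‖G‖ ^ 2 := by positivity
      linarith
    have h3 : ‖G‖ ≤ √(B u n / (d * (2 * α - e))) := by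
      apply Real.le_sqrt_of_sq_le
      rw [le_div_iff₀ hdd, hBn]
      nlinarith [sq_nonneg ‖x n - ybar n - r n • G‖]
    have hrn : 0 < r n := by linarith [(hr n).1]
    have h4 : ‖x n - ybar n‖ ≤ ‖x n - ybar n - r n • G‖ + ‖r n • G‖ := by
      have := norm_add_le (x n - ybar n - r n • G) (r n • G)
      rwa [sub_add_cancel] at this
    rw [norm_smul, Real.norm_of_nonneg hrn.le] at h4
    have h5 : r n * ‖G‖ ≤ e * √(B u n / (d * (2 * α - e))) :=
      mul_le_mul (hr n).2 h3 (norm_nonneg _) (hrn.le.trans (hr n).2)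
    rw [norm_sub_rev]
    linarith
  have hyi : ∀ i, Tendsto (fun n => y n i) atTop (𝓝 p) := by
    intro i
    have h1 : Tendsto (fun n => ‖y n i - x n‖) atTop (𝓝 0) :=
      squeeze_zero (fun n => norm_nonneg _)
        (fun n => by rw [hybar n]; exact hiN n i) hyb0
    simpa using (tendsto_zero_iff_norm_tendsto_zero.2 h1).add hxp
  have hyb0' := tendsto_zero_iff_norm_tendsto_zero.2 hyb0
  have hyb : Tendsto ybar atTop (𝓝 p) := by
    simpa using hyb0'.add hxp
  rw [hF]
  refine ⟨⟨hpC, fun i w hw => ?_⟩, fun j => ?_⟩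
  · -- equilibrium part
    refine aux_minty C hCcv (f i) (hfA1 i) (hfA2 i) (hfA3 i) (hfA4conv i) (hfA4lsc i) p hpC
      (A i p) (fun w hw => ?_) w hw
    have hAx : Tendsto (fun n => A i (x n)) atTop (𝓝 (A i p)) := by
      have h1 : Tendsto (fun n => ‖A i (x n) - A i p‖) atTop (𝓝 0) := by
        have h2 : Tendsto (fun n => ‖x n - p‖ / α) atTop (𝓝 0) := by
          simpa using ((hxp.sub_const p).norm).div_const α
        refine squeeze_zero (fun n => norm_nonneg _) (fun n => ?_) h2
        have h3 := hism i _ (hxC n) p hpC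
        have h4 := real_inner_le_norm (A i (x n) - A i p) (x n - p)
        rw [le_div_iff₀ hα]
        rcases (norm_nonneg (A i (x n) - A i p)).eq_or_lt with h0 | h0
        · rw [← h0]; simp
        · refine le_of_mul_le_mul_left ?_ h0
          nlinarith
      simpa using (tendsto_zero_iff_norm_tendsto_zero.2 h1).add_const (A i p)
    have hterm : Tendsto (fun n => (1 / r n) * ⟪w - y n i, y n i - x n⟫) atTop (𝓝 0) := by
      have h1 : Tendsto (fun n => (1 / d) * ‖⟪w - y n i, y n i - x n⟫‖) atTop (𝓝 0) := by
        have := (((hyi i).const_sub w).inner ((hyi i).sub hxp) (𝕜 := ℝ)).norm.const_mul (1 / d)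
        simpa using this
      refine squeeze_zero_norm (fun n => ?_) h1
      have hrn : 0 < r n := by linarith [(hr n).1]
      rw [norm_mul, Real.norm_of_nonneg (by positivity : 0 ≤ 1 / r n)]
      exact mul_le_mul_of_nonneg_right (one_div_le_one_div_of_le hd (hr n).1) (norm_nonneg _)
    have hR : Tendsto (fun n => ⟪A i (x n), w - y n i⟫ +
        (1 / r n) * ⟪w - y n i, y n i - x n⟫) atTop (𝓝 ⟪A i p, w - p⟫) := by
      simpa using (hAx.inner ((hyi i).const_sub w) (𝕜 := ℝ)).add hterm
    have hle : ∀ n, f i w (y n i) ≤ ⟪A i (x n), w - y n i⟫ +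
        (1 / r n) * ⟪w - y n i, y n i - x n⟫ := by
      intro n
      have h1 := (hy n i).2 w hw
      have h2 := hfA2 i _ (hy n i).1 w hw
      linarith
    refine le_of_forall_lt fun q hq => ?_
    obtain ⟨q', hq1, hq2⟩ := exists_between hq
    have hyW : Tendsto (fun n => y n i) atTop (𝓝[C] p) :=
      tendsto_nhdsWithin_of_tendsto_nhds_of_eventually_within _ (hyi i)
        (Eventually.of_forall fun n => (hy n i).1)
    have h3 := hyW.eventually (hfA4lsc i w hw p hpC q' hq2)
    have h4 : q' ≤ ⟪A i p, w - p⟫ := by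
      refine ge_of_tendsto hR ?_
      filter_upwards [h3] with n hn
      exact hn.le.trans (hle n)
    linarith
  · -- fixed point part
    have hz0 : Tendsto (fun n => ‖z n j - x n‖) atTop (𝓝 0) := by
      have h1 : Tendsto (fun n => ‖zbar n - x n‖) atTop (𝓝 0) := by
        simpa using (hzb.sub hxp).norm
      exact squeeze_zero (fun n => norm_nonneg _)
        (fun n => by rw [hzbar n]; exact hjM n j) h1
    have hb0 : 0 < 1 - b := by linarith
    have hSy0 : Tendsto (fun n => ‖(S j)^[n] (ybar n) - ybar n‖) atTop (𝓝 0) := by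
      have h1 : Tendsto (fun n => (‖z n j - x n‖ + ‖ybar n - x n‖) / ((1 - c) * (1 - b))) atTop
          (𝓝 0) := by
        simpa using (hz0.add hyb0).div_const ((1 - c) * (1 - b))
      refine squeeze_zero' (Eventually.of_forall fun n => norm_nonneg _) ?_ h1
      filter_upwards [hac] with n hn
      rw [le_div_iff₀ (by positivity)]
      have ha : 0 < 1 - a n := by linarith [ha1 n]
      have hbn : 0 < 1 - β n := by linarith [(hβ n).2]
      have e1 : ((1 - a n) * (1 - β n)) • ((S j)^[n] (ybar n) - ybar n)
          = (z n j - x n) - (1 - a n) • (ybar n - x n) := by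
        rw [hz]; module
      have h2 : (1 - a n) * (1 - β n) * ‖(S j)^[n] (ybar n) - ybar n‖
          ≤ ‖z n j - x n‖ + (1 - a n) * ‖ybar n - x n‖ := by
        have := norm_sub_le (z n j - x n) ((1 - a n) • (ybar n - x n))
        rw [← e1, norm_smul, norm_smul, Real.norm_of_nonneg ha.le,
          Real.norm_of_nonneg (mul_pos ha hbn).le] at this
        exact this
      have h3 : (1 - c) * (1 - b) ≤ (1 - a n) * (1 - β n) :=
        mul_le_mul (by linarith) (by linarith [(hβ n).2]) hb0.le ha.le
      have h4 := mul_le_mul_of_nonneg_right h3 (norm_nonneg ((S j)^[n] (ybar n) - ybar n))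
      have h5 : (1 - a n) * ‖ybar n - x n‖ ≤ 1 * ‖ybar n - x n‖ :=
        mul_le_mul_of_nonneg_right (by linarith [ha0 n]) (norm_nonneg _)
      linarith
    have hlip : ∀ n, ∀ v ∈ C, ∀ w ∈ C, ‖(S j)^[n] v - (S j)^[n] w‖
        ≤ (√(k n) + √κ) / (1 - √κ) * ‖v - w‖ := by
      intro n v hv w hw
      refine aux_lip κ (k n) ‖v - w‖ _ _ hκ0 hκ1 (by linarith [hk1 n]) (norm_nonneg _)
        (norm_nonneg _) (norm_nonneg _) ?_ (hasym' j n v hv w hw)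
      have e1 : (v - (S j)^[n] v) - (w - (S j)^[n] w)
          = (v - w) - ((S j)^[n] v - (S j)^[n] w) := by abel
      rw [e1]
      exact norm_sub_le _ _
    have hSp : Tendsto (fun n => (S j)^[n] p) atTop (𝓝 p) := by
      have h1 : Tendsto (fun n => ‖(S j)^[n] (ybar n) - (S j)^[n] p‖) atTop (𝓝 0) := by
        refine squeeze_zero (fun n => norm_nonneg _) (fun n => hlip n _ (hybC n) p hpC) ?_
        have := ((hklim.sqrt.add_const (√κ)).div_const (1 - √κ)).mul (hyb.sub_const p).norm
        simpa using this
      have h2 := tendsto_zero_iff_norm_tendsto_zero.2 h1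
      have h3 := tendsto_zero_iff_norm_tendsto_zero.2 hSy0
      have h4 := (h3.add hyb).sub h2
      simpa using h4
    have hSp1 : Tendsto (fun n => (S j)^[n + 1] p) atTop (𝓝 p) :=
      hSp.comp (tendsto_add_atTop_nat 1)
    have hSp2 : Tendsto (fun n => (S j)^[n + 1] p) atTop (𝓝 (S j p)) := by
      have h1 : Tendsto (fun n => ‖(S j)^[n + 1] p - S j p‖) atTop (𝓝 0) := by
        have h2 : Tendsto (fun n => (√(k 1) + √κ) / (1 - √κ) * ‖(S j)^[n] p - p‖) atTop
            (𝓝 0) := by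
          simpa using (hSp.sub_const p).norm.const_mul ((√(k 1) + √κ) / (1 - √κ))
        refine squeeze_zero (fun n => norm_nonneg _) (fun n => ?_) h2
        have := hlip 1 _ (hSC j n p hpC) p hpC
        rw [Function.iterate_succ_apply']
        simpa using this
      simpa using (tendsto_zero_iff_norm_tendsto_zero.2 h1).add_const (S j p)
    exact tendsto_nhds_unique hSp2 hSp1
end

section
/- Let H be a real Hilbert space, C ⊆ H nonempty closed convex. Suppose each f_i (i = 1,…,N) satisfies (A1)–(A4), each S_j : C → C (j = 1,…,M) is κ-strictly pseudocontractive, the parameters satisfy 0 < α_n < 1 with limsup α_n < 1, κ ≤ β_n ≤ b < 1, and 0 < d ≤ r_n ≤ e, and F = (∩_{i=1}^N EP(f_i,C)) ∩ (∩_{j=1}^M F(S_j)) is nonempty. Let x_0 ∈ C, C_0 = C, and for n ≥ 0: y_n^i ∈ C satisfies f_i(y_n^i, y) + (1/r_n)⟨y − y_n^i, y_n^i − x_n⟩ ≥ 0 for all y ∈ C; i_n maximizes ‖y_n^i − x_n‖ and ȳ_n = y_n^{i_n}; z_n^j = α_n x_n + (1−α_n)(β_n ȳ_n + (1−β_n)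 S_j ȳ_n); j_n maximizes ‖z_n^j − x_n‖ and z̄_n = z_n^{j_n}; C_{n+1} = {v ∈ C_n : ‖z̄_n − v‖ ≤ ‖x_n − v‖}; x_{n+1} = P_{C_{n+1}} x_0. Then {x_n} converges strongly to P_F x_0. -/
open scoped RealInnerProductSpace
open Filter Topology

theorem norm_comb_sq {H : Type*} [NormedAddCommGroup H] [InnerProductSpace ℝ H] (t : ℝ) (u w : H) :
    ‖t • u + (1 - t) • w‖ ^ 2 = t * ‖u‖ ^ 2 + (1 - t) * ‖w‖ ^ 2 - t * (1 - t) * ‖u - w‖ ^ 2 := by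
  simp only [← real_inner_self_eq_norm_sq, inner_add_left, inner_add_right, inner_sub_left,
    inner_sub_right, real_inner_smul_left, real_inner_smul_right, real_inner_comm u w]
  ring

theorem tendsto_zero_of_sq {u : ℕ → ℝ} (h : Tendsto (fun n => u n ^ 2) atTop (𝓝 0)) :
    Tendsto u atTop (𝓝 0) := by
  have h2 := (Real.continuous_sqrt.tendsto 0).comp h
  rw [Real.sqrt_zero] at h2
  rw [tendsto_zero_iff_abs_tendsto_zero]
  refine h2.congr fun n => ?_
  simp [Real.sqrt_sq_eq_abs]

theorem le_of_sq_le_sq_aux {s t : ℝ} (h : s ^ 2 ≤ t ^ 2) (ht : 0 ≤ t) : s ≤ t :=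
  le_trans (le_abs_self s) (abs_le_of_sq_le_sq h ht)

/-- **Corollary 3.5.** Parallel hybrid algorithm for a finite family of
equilibrium problems and κ-strictly pseudocontractive mappings: `{xₙ}` converges
strongly to `P_F x₀`. -/
theorem corollary35_strong_convergence
    {H : Type*} [NormedAddCommGroup H] [InnerProductSpace ℝ H] [CompleteSpace H]
    (C : Set H) (hCne : C.Nonempty) (hCcl : IsClosed C) (hCcv : Convex ℝ C)
    (N M : ℕ) (hN : 0 < N) (hM : 0 < M)
    -- the bifunctions fᵢ satisfy (A1)-(A4)
    (f : Fin N → H → H → ℝ)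
    (hfA1 : ∀ i, ∀ x ∈ C, f i x x = 0)
    (hfA2 : ∀ i, ∀ x ∈ C, ∀ y ∈ C, f i x y + f i y x ≤ 0)
    (hfA3 : ∀ i, ∀ x ∈ C, ∀ y ∈ C, ∀ z ∈ C,
      Filter.limsup (fun t : ℝ => f i (t • z + (1 - t) • x) y) (nhdsWithin 0 (Set.Ioi 0))
        ≤ f i x y)
    (hfA4conv : ∀ i, ∀ x ∈ C, ConvexOn ℝ C (f i x))
    (hfA4lsc : ∀ i, ∀ x ∈ C, LowerSemicontinuousOn (f i x) C)
    -- the mappings Sⱼ : C → C are κ-strictly pseudocontractive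
    (S : Fin M → H → H) (hS : ∀ j, Set.MapsTo (S j) C C)
    (κ : ℝ) (hκ0 : 0 ≤ κ) (hκ1 : κ < 1)
    (hpseudo : ∀ j, ∀ x ∈ C, ∀ y ∈ C,
      ‖S j x - S j y‖ ^ 2 ≤ ‖x - y‖ ^ 2 + κ * ‖(x - S j x) - (y - S j y)‖ ^ 2)
    -- the solution set F is nonempty
    (F : Set H)
    (hF : F = {v ∈ C | ∀ i, ∀ y ∈ C, 0 ≤ f i v y} ∩ {v | ∀ j, S j v = v})
    (hFne : F.Nonempty)
    -- control parameters
    (a : ℕ → ℝ) (ha0 : ∀ n, 0 < a n) (ha1 : ∀ n, a n < 1)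
    (halimsup : Filter.limsup a Filter.atTop < 1)
    (β : ℕ → ℝ) (b : ℝ) (hbκ : κ < b) (hb1 : b < 1) (hβ : ∀ n, κ ≤ β n ∧ β n ≤ b)
    (r : ℕ → ℝ) (d e : ℝ) (hd : 0 < d) (hr : ∀ n, d ≤ r n ∧ r n ≤ e)
    -- the iterates of Algorithm 1
    (x : ℕ → H) (y : ℕ → Fin N → H) (z : ℕ → Fin M → H)
    (iN : ℕ → Fin N) (jM : ℕ → Fin M) (ybar zbar : ℕ → H) (Cset : ℕ → Set H)
    (hx0 : x 0 ∈ C) (hC0 : Cset 0 = C)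
    -- (i) yₙⁱ = T_{rₙ}^{fᵢ} xₙ
    (hy : ∀ n i, y n i ∈ C ∧ ∀ w ∈ C,
      0 ≤ f i (y n i) w + (1 / r n) * ⟪w - y n i, y n i - x n⟫)
    -- (ii) iₙ maximizes ‖yₙⁱ - xₙ‖ and ȳₙ = yₙ^{iₙ}
    (hiN : ∀ n i, ‖y n i - x n‖ ≤ ‖y n (iN n) - x n‖)
    (hybar : ∀ n, ybar n = y n (iN n))
    -- (iii) zₙʲ = αₙ xₙ + (1-αₙ)(βₙ ȳₙ + (1-βₙ) Sⱼ ȳₙ)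
    (hz : ∀ n j, z n j = a n • x n +
      (1 - a n) • (β n • ybar n + (1 - β n) • S j (ybar n)))
    -- (iv) jₙ maximizes ‖zₙʲ - xₙ‖ and z̄ₙ = zₙ^{jₙ}
    (hjM : ∀ n j, ‖z n j - x n‖ ≤ ‖z n (jM n) - x n‖)
    (hzbar : ∀ n, zbar n = z n (jM n))
    -- (v) Cₙ₊₁ = {v ∈ Cₙ : ‖z̄ₙ - v‖ ≤ ‖xₙ - v‖}
    (hCset : ∀ n, Cset (n + 1) = {v ∈ Cset n | ‖zbar n - v‖ ≤ ‖x n - v‖})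
    -- (vi) xₙ₊₁ = P_{Cₙ₊₁} x₀
    (hxproj : ∀ n, IsProjOn (Cset (n + 1)) (x 0) (x (n + 1))) :
    ∃ p, IsProjOn F (x 0) p ∧ Filter.Tendsto x Filter.atTop (nhds p) := by
  -- key estimate
  have hymem : ∀ n, ybar n ∈ C := fun n => by rw [hybar]; exact (hy n _).1
  have key : ∀ v ∈ F, ∀ n, ‖zbar n - v‖ ^ 2 ≤ ‖x n - v‖ ^ 2 - (1 - a n) * ‖x n - ybar n‖ ^ 2 := by
    intro v hv n
    rw [hF] at hv
    obtain ⟨⟨hvC, hvf⟩, hvS⟩ := hv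
    have hvS' : S (jM n) v = v := hvS (jM n)
    have hrpos : 0 < r n := lt_of_lt_of_le hd (hr n).1
    have h1 : 0 ≤ ⟪v - ybar n, ybar n - x n⟫ := by
      have e1 := (hy n (iN n)).2 v hvC
      rw [← hybar] at e1
      have e2 := hvf (iN n) (ybar n) (hymem n)
      have e3 := hfA2 (iN n) v hvC (ybar n) (hymem n)
      have e4 : 0 ≤ (1 / r n) * ⟪v - ybar n, ybar n - x n⟫ := by linarith
      exact nonneg_of_mul_nonneg_right e4 (by positivity)
    have h2 : ‖ybar n - v‖ ^ 2 ≤ ‖x n - v‖ ^ 2 - ‖x n - ybar n‖ ^ 2 := by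
      have : ‖x n - v‖ ^ 2 = ‖ybar n - v‖ ^ 2 + ‖x n - ybar n‖ ^ 2
          + 2 * ⟪v - ybar n, ybar n - x n⟫ := by
        have e : x n - v = -((v - ybar n) + (ybar n - x n)) := by abel
        rw [e, norm_neg, norm_add_sq_real, norm_sub_rev v, norm_sub_rev (ybar n) (x n)]
        ring
      linarith
    have h3 := hpseudo (jM n) (ybar n) (hymem n) v hvC
    rw [hvS', sub_self, sub_zero] at h3
    have h4 := norm_comb_sq (β n) (ybar n - v) (S (jM n) (ybar n) - v)
    rw [sub_sub_sub_cancel_right] at h4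
    have h5 := norm_comb_sq (a n) (x n - v)
      (β n • (ybar n - v) + (1 - β n) • (S (jM n) (ybar n) - v))
    have h6 : zbar n - v = a n • (x n - v) +
        (1 - a n) • (β n • (ybar n - v) + (1 - β n) • (S (jM n) (ybar n) - v)) := by
      rw [hzbar, hz]; module
    rw [← h6] at h5
    have hb := hβ n
    have h7 : ‖β n • (ybar n - v) + (1 - β n) • (S (jM n) (ybar n) - v)‖ ^ 2 ≤ ‖ybar n - v‖ ^ 2 := by
      rw [h4]
      have hb' : 0 ≤ 1 - β n := by linarith
      have m1 := mul_le_mul_of_nonneg_left h3 hb'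
      have m2 : 0 ≤ (1 - β n) * (β n - κ) * ‖ybar n - S (jM n) (ybar n)‖ ^ 2 :=
        mul_nonneg (mul_nonneg hb' (by linarith)) (sq_nonneg _)
      nlinarith
    rw [h5]
    have ha' : 0 ≤ 1 - a n := by linarith [ha1 n]
    have m1 := mul_le_mul_of_nonneg_left (h7.trans h2) ha'
    have m2 : 0 ≤ a n * (1 - a n) * ‖x n - v - (β n • (ybar n - v) +
      (1 - β n) • (S (jM n) (ybar n) - v))‖ ^ 2 :=
      mul_nonneg (mul_nonneg (ha0 n).le ha') (sq_nonneg _)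
    linarith
  -- F is contained in every Cset
  have hFC : ∀ n, F ⊆ Cset n := by
    intro n
    induction n with
    | zero => rw [hC0, hF]; exact fun v hv => hv.1.1
    | succ k ih =>
      intro v hv
      rw [hCset]
      refine ⟨ih hv, ?_⟩
      refine le_of_sq_le_sq_aux ?_ (norm_nonneg _)
      have h := key v hv k
      have : 0 ≤ (1 - a k) * ‖x k - ybar k‖ ^ 2 :=
        mul_nonneg (by linarith [ha1 k]) (sq_nonneg _)
      linarith
  have hanti : Antitone Cset := antitone_nat_of_succ_le fun n => by
    rw [hCset]; exact fun v hv => hv.1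
  have hmid : ∀ n, ∀ u ∈ Cset n, ∀ w ∈ Cset n, (1 / 2 : ℝ) • u + (1 - 1 / 2 : ℝ) • w ∈ Cset n := by
    intro n
    induction n with
    | zero =>
      intro u hu w hw
      rw [hC0] at *
      exact hCcv hu hw (by norm_num) (by norm_num) (by norm_num)
    | succ k ih =>
      intro u hu w hw
      rw [hCset] at *
      refine ⟨ih u hu.1 w hw.1, le_of_sq_le_sq_aux ?_ (norm_nonneg _)⟩
      have hu2 := pow_le_pow_left₀ (norm_nonneg _) hu.2 2
      have hw2 := pow_le_pow_left₀ (norm_nonneg _) hw.2 2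
      have e : ∀ q : H, q - ((1 / 2 : ℝ) • u + (1 - 1 / 2 : ℝ) • w) =
          (1 / 2 : ℝ) • (q - u) + (1 - 1 / 2 : ℝ) • (q - w) := fun q => by module
      rw [e, e, norm_comb_sq, norm_comb_sq, sub_sub_sub_cancel_left, sub_sub_sub_cancel_left]
      linarith
  have hproj : ∀ n, IsProjOn (Cset n) (x 0) (x n) := by
    intro n
    cases n with
    | zero => exact ⟨by rw [hC0]; exact hx0, fun v _ => by simp⟩
    | succ k => exact hxproj k
  have hdist : ∀ n m, n ≤ m → ‖x n - x m‖ ^ 2 ≤ 2 * ‖x m - x 0‖ ^ 2 - 2 * ‖x n - x 0‖ ^ 2 := by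
    intro n m hnm
    have hm := hanti hnm (hproj m).1
    have h1 := (hproj n).2 _ (hmid n _ (hproj n).1 _ hm)
    have h2 := pow_le_pow_left₀ (norm_nonneg _) h1 2
    have e : ((1 / 2 : ℝ) • x n + (1 - 1 / 2 : ℝ) • x m) - x 0 =
          (1 / 2 : ℝ) • (x n - x 0) + (1 - 1 / 2 : ℝ) • (x m - x 0) := by module
    rw [e, norm_comb_sq, sub_sub_sub_cancel_right] at h2
    linarith
  obtain ⟨v₀, hv₀⟩ := hFne
  have hmono : Monotone fun n => ‖x n - x 0‖ ^ 2 := by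
    intro n m hnm
    have := hdist n m hnm
    have := sq_nonneg ‖x n - x m‖
    simp only
    linarith
  have hbdd : BddAbove (Set.range fun n => ‖x n - x 0‖ ^ 2) := by
    refine ⟨‖v₀ - x 0‖ ^ 2, ?_⟩
    rintro _ ⟨n, rfl⟩
    exact pow_le_pow_left₀ (norm_nonneg _) ((hproj n).2 _ (hFC n hv₀)) 2
  have hlim := tendsto_atTop_ciSup hmono hbdd
  have hcau : CauchySeq x := by
    rw [Metric.cauchySeq_iff']
    intro ε hε
    have hc := Metric.cauchySeq_iff'.1 hlim.cauchySeq (ε ^ 2 / 2) (by positivity)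
    obtain ⟨K, hK⟩ := hc
    refine ⟨K, fun n hn => ?_⟩
    have h1 := hK n hn
    have h2 := hdist K n hn
    rw [Real.dist_eq] at h1
    have h3 := (abs_lt.1 h1).2
    rw [dist_comm, dist_eq_norm]
    refine lt_of_pow_lt_pow_left₀ 2 hε.le ?_
    linarith
  obtain ⟨p, hp⟩ := cauchySeq_tendsto_of_complete hcau
  have hpC : p ∈ C := hCcl.mem_of_tendsto hp (Eventually.of_forall fun n => by
    rw [← hC0]; exact hanti (Nat.zero_le n) (hproj n).1)
  refine ⟨p, ⟨?_, ?_⟩, hp⟩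
  swap
  · intro v hv
    exact le_of_tendsto (hp.sub_const (x 0)).norm
      (Eventually.of_forall fun n => (hproj n).2 _ (hFC n hv))
  -- asymptotics
  have hp1 : Tendsto (fun n => x (n + 1)) atTop (𝓝 p) := hp.comp (tendsto_add_atTop_nat 1)
  have hzx1 : Tendsto (fun n => zbar n - x (n + 1)) atTop (𝓝 0) := by
    refine squeeze_zero_norm (a := fun n => ‖x n - x (n + 1)‖) (fun n => ?_) ?_
    · have := (hproj (n + 1)).1
      rw [hCset] at this
      exact this.2
    · simpa using (hp.sub hp1).norm
  have hzb : Tendsto zbar atTop (𝓝 p) := by simpa using hzx1.add hp1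
  obtain ⟨c, hc1, hc2⟩ := exists_between halimsup
  have hac : ∀ᶠ n in atTop, a n < c := eventually_lt_of_limsup_lt hc1
    (isBoundedUnder_of ⟨1, fun n => (ha1 n).le⟩)
  have hc0 : 0 < 1 - c := by linarith
  have hxy : Tendsto (fun n => ‖x n - ybar n‖) atTop (𝓝 0) := by
    apply tendsto_zero_of_sq
    have hR : Tendsto (fun n => (‖x n - v₀‖ ^ 2 - ‖zbar n - v₀‖ ^ 2) / (1 - c)) atTop (𝓝 0) := by
      simpa using (((hp.sub_const v₀).norm.pow 2).sub ((hzb.sub_const v₀).norm.pow 2)).div_const (1 - c)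
    refine squeeze_zero' (Eventually.of_forall fun n => sq_nonneg _) ?_ hR
    filter_upwards [hac] with n hn
    rw [le_div_iff₀ hc0]
    have h := key v₀ hv₀ n
    have := mul_le_mul_of_nonneg_right (show 1 - c ≤ 1 - a n by linarith) (sq_nonneg ‖x n - ybar n‖)
    linarith
  have hyx : ∀ i, Tendsto (fun n => y n i - x n) atTop (𝓝 0) := by
    intro i
    refine squeeze_zero_norm (fun n => ?_) hxy
    rw [norm_sub_rev (x n), hybar]
    exact hiN n i
  have hyp : ∀ i, Tendsto (fun n => y n i) atTop (𝓝 p) := fun i => by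
    simpa using (hyx i).add hp
  have hybx : Tendsto (fun n => ybar n - x n) atTop (𝓝 0) := by
    refine squeeze_zero_norm (fun n => ?_) hxy
    rw [norm_sub_rev]
  have hybp : Tendsto ybar atTop (𝓝 p) := by simpa using hybx.add hp
  have hzx : Tendsto (fun n => ‖zbar n - x n‖) atTop (𝓝 0) := by
    simpa using (hzb.sub hp).norm
  have hSy : ∀ j, Tendsto (fun n => ybar n - S j (ybar n)) atTop (𝓝 0) := by
    intro j
    have hR : Tendsto (fun n => (‖zbar n - x n‖ / (1 - c) + ‖x n - ybar n‖) / (1 - b))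
        atTop (𝓝 0) := by
      simpa using ((hzx.div_const (1 - c)).add hxy).div_const (1 - b)
    rw [tendsto_zero_iff_norm_tendsto_zero]
    refine squeeze_zero' (Eventually.of_forall fun n => norm_nonneg _) ?_ hR
    filter_upwards [hac] with n hn
    have hb0 : 0 < 1 - b := by linarith
    have hbn := hβ n
    rw [le_div_iff₀ hb0]
    set q := β n • ybar n + (1 - β n) • S j (ybar n) with hq
    have h1 : ‖q - x n‖ ≤ ‖zbar n - x n‖ / (1 - c) := by
      rw [le_div_iff₀ hc0]
      have e : z n j - x n = (1 - a n) • (q - x n) := by rw [hz, ← hq]; module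
      have h := hjM n j
      rw [← hzbar, e, norm_smul, Real.norm_of_nonneg (by linarith [ha1 n])] at h
      have := mul_le_mul_of_nonneg_right (show 1 - c ≤ 1 - a n by linarith) (norm_nonneg (q - x n))
      linarith
    have e2 : (1 - β n) • (ybar n - S j (ybar n)) = -((q - x n) + (x n - ybar n)) := by
      rw [hq]; module
    have h3 : (1 - β n) * ‖ybar n - S j (ybar n)‖ ≤ ‖q - x n‖ + ‖x n - ybar n‖ := by
      rw [← Real.norm_of_nonneg (show 0 ≤ 1 - β n by linarith), ← norm_smul, e2, norm_neg]
      exact norm_add_le _ _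
    have := mul_le_mul_of_nonneg_right (show 1 - b ≤ 1 - β n by linarith)
      (norm_nonneg (ybar n - S j (ybar n)))
    linarith
  have hfix : ∀ j, S j p = p := by
    intro j
    have hSp : Tendsto (fun n => S j (ybar n)) atTop (𝓝 p) := by
      simpa using hybp.sub (hSy j)
    have hL : Tendsto (fun n => ‖S j (ybar n) - S j p‖ ^ 2) atTop (𝓝 (‖p - S j p‖ ^ 2)) :=
      (hSp.sub_const _).norm.pow 2
    have hR : Tendsto (fun n => ‖ybar n - p‖ ^ 2 + κ * ‖(ybar n - S j (ybar n)) - (p - S j p)‖ ^ 2)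
        atTop (𝓝 (‖p - p‖ ^ 2 + κ * ‖0 - (p - S j p)‖ ^ 2)) :=
      ((hybp.sub_const p).norm.pow 2).add ((((hSy j).sub_const _).norm.pow 2).const_mul κ)
    have h := le_of_tendsto_of_tendsto' hL hR fun n => hpseudo j _ (hymem n) p hpC
    rw [sub_self, norm_zero, zero_sub, norm_neg] at h
    have h0 : ‖p - S j p‖ ^ 2 = 0 := by
      have := sq_nonneg ‖p - S j p‖
      nlinarith
    have h1 : p - S j p = 0 := by simpa using h0
    exact (sub_eq_zero.1 h1).symm
  have hminty : ∀ i, ∀ w ∈ C, f i w p ≤ 0 := by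
    intro i w hw
    by_contra! hpos
    have hy' : Tendsto (fun n => y n i) atTop (𝓝[C] p) :=
      tendsto_nhdsWithin_iff.2 ⟨hyp i, Eventually.of_forall fun n => (hy n i).1⟩
    have hl := hy'.eventually (hfA4lsc i w hw p hpC (f i w p / 2) (by linarith))
    have hR : Tendsto (fun n => 1 / d * (‖w - y n i‖ * ‖y n i - x n‖)) atTop (𝓝 0) := by
      simpa using ((((hyp i).const_sub w).norm).mul (hyx i).norm).const_mul (1 / d)
    have hs := hR.eventually (gt_mem_nhds (show 0 < f i w p / 2 by linarith))
    obtain ⟨n, hn1, hn2⟩ := (hl.and hs).exists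
    have hn1' : f i w p / 2 < f i w (y n i) := hn1
    have e1 := (hy n i).2 w hw
    have e2 := hfA2 i w hw (y n i) (hy n i).1
    have hrpos : 0 < r n := lt_of_lt_of_le hd (hr n).1
    have e3 : (1 / r n) * ⟪w - y n i, y n i - x n⟫ ≤ 1 / d * (‖w - y n i‖ * ‖y n i - x n‖) := by
      calc _ ≤ (1 / r n) * (‖w - y n i‖ * ‖y n i - x n‖) :=
            mul_le_mul_of_nonneg_left (real_inner_le_norm _ _) (by positivity)
        _ ≤ _ := mul_le_mul_of_nonneg_right
            (one_div_le_one_div_of_le hd (hr n).1) (by positivity)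
    linarith
  rw [hF]
  refine ⟨⟨hpC, fun i w hw => ?_⟩, hfix⟩
  refine le_trans ?_ (hfA3 i p hpC w hw w hw)
  rw [limsup_eq]
  refine Real.sInf_nonneg fun A hA => ?_
  have hA' : ∀ᶠ t : ℝ in 𝓝[>] 0, f i (t • w + (1 - t) • p) w ≤ A := hA
  have h01 : ∀ᶠ t : ℝ in 𝓝[>] 0, t ∈ Set.Ioo (0 : ℝ) 1 := Ioo_mem_nhdsGT one_pos
  obtain ⟨t, ht1, ht2, ht3⟩ := (hA'.and h01).exists
  have hu : t • w + (1 - t) • p ∈ C := hCcv hw hpC ht2.le (by linarith) (by ring)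
  have g1 := (hfA4conv i _ hu).2 hw hpC ht2.le (show 0 ≤ 1 - t by linarith) (by ring)
  rw [hfA1 i _ hu, smul_eq_mul, smul_eq_mul] at g1
  have g2 := hminty i _ hu
  have g3 : (1 - t) * f i (t • w + (1 - t) • p) p ≤ 0 :=
    mul_nonpos_of_nonneg_of_nonpos (by linarith) g2
  have g4 : 0 ≤ t * f i (t • w + (1 - t) • p) w := by linarith
  exact (nonneg_of_mul_nonneg_right g4 ht2).trans ht1
end
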